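/- Let M ⊆ M_O. Then every sequence of elements of M has a subsequence that converges in M_O to some element of M_O if and only if there exists a sequence r_i ↓ 0 such that for each i both sup_{μ ∈ M} μ(S \ C^{r_i}) < ∞, and for every η > 0 there exists a compact set K_i ⊆ S \ C^{r_i} with sup_{μ ∈ M} μ(S \ (C^{r_i} ∪ K_i)) ≤ η. -/

import Mathlib

open MeasureTheory Metric Filter Topology Set ENNReal

noncomputable section

variable {S : Type*} [MetricSpace S] [MeasurableSpace S]

/-- `A` is bounded away from `C`: `A ⊆ S \ C^r` for some `r > 0`. -/
def BddAway (C A : Set S) : Prop := ∃ r > 0, ∀ x ∈ A, r ≤ infDist x C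

/-- The class `C_O` of test functions: bounded, nonnegative, continuous on `O = S \ C`,
and vanishing on `C^r` for some `r > 0` (extended by `0` to all of `S`). -/
def IsCO (C : Set S) (f : S → ℝ) : Prop :=
  ContinuousOn f Cᶜ ∧ (∀ x, 0 ≤ f x) ∧ (∃ B : ℝ, ∀ x, f x ≤ B) ∧
    ∃ r > 0, ∀ x, infDist x C < r → f x = 0

/-- The class `M_O`: Borel measures on `O = S \ C` (i.e. giving no mass to `C`)
that are finite on `S \ C^r` for each `r > 0`. -/
def MemMO (C : Set S) (μ : Measure S) : Prop :=
  μ C = 0 ∧ ∀ r : ℝ, 0 < r → μ {x | r ≤ infDist x C} < ⊤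

/-- Convergence `μ_n → μ` in `M_O`. -/
def MOTendsto (C : Set S) (μn : ℕ → Measure S) (μ : Measure S) : Prop :=
  ∀ f : S → ℝ, IsCO C f →
    Tendsto (fun n => ∫ x, f x ∂ μn n) atTop (𝓝 (∫ x, f x ∂ μ))

section

variable {C : Set S} {r : ℝ}

/-- A continuous cutoff equal to `1` where `r ≤ infDist x C` and to `0` where
`infDist x C ≤ r / 2`. -/
def cutoff (C : Set S) (r : ℝ) (x : S) : ℝ := max 0 (min 1 (2 * infDist x C / r - 1))

omit [MeasurableSpace S] in
lemma continuous_cutoff : Continuous (cutoff C r) := by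
  have := continuous_infDist_pt C
  unfold cutoff
  fun_prop

omit [MeasurableSpace S] in
lemma cutoff_nonneg (x : S) : 0 ≤ cutoff C r x := le_max_left _ _

omit [MeasurableSpace S] in
lemma cutoff_le_one (x : S) : cutoff C r x ≤ 1 := max_le zero_le_one (min_le_left _ _)

omit [MeasurableSpace S] in
lemma cutoff_eq_one (hr : 0 < r) {x : S} (hx : r ≤ infDist x C) : cutoff C r x = 1 := by
  have : 1 ≤ 2 * infDist x C / r - 1 := by
    rw [le_sub_iff_add_le, le_div_iff₀ hr]
    linarith
  simp [cutoff, this]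

omit [MeasurableSpace S] in
lemma cutoff_eq_zero (hr : 0 < r) {x : S} (hx : infDist x C < r / 2) : cutoff C r x = 0 := by
  have : 2 * infDist x C / r - 1 ≤ 0 := by
    rw [sub_nonpos, div_le_iff₀ hr]
    linarith
  simp [cutoff, this]

omit [MeasurableSpace S] in
lemma isCO_cutoff_mul (hr : 0 < r) {h : S → ℝ} (hc : Continuous h) (h0 : ∀ x, 0 ≤ h x) {B : ℝ}
    (hB : ∀ x, h x ≤ B) : IsCO C (fun x => cutoff C r x * h x) := by
  refine ⟨(continuous_cutoff.mul hc).continuousOn, fun x => mul_nonneg (cutoff_nonneg x) (h0 x),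
    ⟨B, fun x => ?_⟩, r / 2, half_pos hr, fun x hx => by simp [cutoff_eq_zero hr hx]⟩
  exact (mul_le_of_le_one_left (h0 x) (cutoff_le_one x)).trans (hB x)

omit [MeasurableSpace S] in
lemma IsCO.continuous (hC : IsClosed C) {f : S → ℝ} (hf : IsCO C f) : Continuous f := by
  obtain ⟨hc, -, -, ρ, hρ, hz⟩ := hf
  refine continuous_iff_continuousAt.2 fun x => ?_
  by_cases hx : x ∈ C
  · have hU : {y | infDist y C < ρ} ∈ 𝓝 x :=
      (isOpen_lt (continuous_infDist_pt C) continuous_const).mem_nhds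
        (by simpa [infDist_zero_of_mem hx] using hρ)
    have : f =ᶠ[𝓝 x] fun _ => 0 := by
      filter_upwards [hU] with y hy using hz y hy
    exact continuousAt_const.congr this.symm
  · exact hc.continuousAt (hC.isOpen_compl.mem_nhds hx)

lemma measurableSet_le_infDist [BorelSpace S] : MeasurableSet {x : S | r ≤ infDist x C} :=
  (isClosed_le continuous_const (continuous_infDist_pt C)).measurableSet

/-- Test functions in `C_O` are integrable against measures in `M_O`. -/
lemma IsCO.integrable [BorelSpace S] (hC : IsClosed C) {f : S → ℝ} (hf : IsCO C f)
    {μ : Measure S} (hμ : MemMO C μ) : Integrable f μ := by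
  have hcont := hf.continuous hC
  obtain ⟨-, h0, ⟨B, hB⟩, ρ, hρ, hz⟩ := hf
  have hA : IntegrableOn f {x | ρ ≤ infDist x C} μ := by
    refine IntegrableOn.of_bound (hμ.2 ρ hρ) hcont.measurable.aestronglyMeasurable B ?_
    exact Eventually.of_forall fun x => by simpa [abs_of_nonneg (h0 x)] using hB x
  refine (integrableOn_iff_integrable_of_support_subset fun x hx => ?_).1 hA
  by_contra h
  exact hx (hz x (not_le.1 h))

/-- The measure with density `cutoff C r` with respect to `μ`. -/
def cutoffMeasure (C : Set S) (r : ℝ) (μ : Measure S) : Measure S :=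
  μ.withDensity fun x => ENNReal.ofReal (cutoff C r x)

lemma measure_le_cutoffMeasure [BorelSpace S] (hr : 0 < r) (μ : Measure S) {s : Set S}
    (hs : s ⊆ {x | r ≤ infDist x C}) (hsm : MeasurableSet s) : μ s ≤ cutoffMeasure C r μ s := by
  rw [cutoffMeasure, withDensity_apply _ hsm]
  calc μ s = ∫⁻ _ in s, 1 ∂μ := by simp
    _ ≤ _ := setLIntegral_mono' hsm fun x hx => by simp [cutoff_eq_one hr (hs hx)]

lemma lintegral_cutoffMeasure [BorelSpace S] (hC : IsClosed C) (hr : 0 < r) {μ : Measure S}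
    (hμ : MemMO C μ) (f : BoundedContinuousFunction S NNReal) :
    ∫⁻ x, f x ∂cutoffMeasure C r μ = ENNReal.ofReal (∫ x, cutoff C r x * f x ∂μ) := by
  have hco : IsCO C (fun x => cutoff C r x * f x) :=
    isCO_cutoff_mul hr (by fun_prop) (fun x => (f x).2)
      (fun x => NNReal.coe_le_coe.2 (f.apply_le_nndist_zero x))
  rw [ofReal_integral_eq_lintegral_ofReal (hco.integrable hC hμ) (Eventually.of_forall hco.2.1),
    cutoffMeasure, lintegral_withDensity_eq_lintegral_mul _
      continuous_cutoff.measurable.ennreal_ofReal (by fun_prop)]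
  refine lintegral_congr fun x => ?_
  simp [ENNReal.ofReal_mul (cutoff_nonneg x)]

lemma isFiniteMeasure_cutoffMeasure [BorelSpace S] (hC : IsClosed C) (hr : 0 < r) {μ : Measure S}
    (hμ : MemMO C μ) : IsFiniteMeasure (cutoffMeasure C r μ) := by
  refine ⟨?_⟩
  have := lintegral_cutoffMeasure hC hr hμ 1
  simp only [BoundedContinuousFunction.coe_one, Pi.one_apply, ENNReal.coe_one,
    lintegral_one] at this
  simp [this]

/-- `cutoffMeasure` as a finite measure. -/
def cutoffFiniteMeasure [BorelSpace S] (hC : IsClosed C) (hr : 0 < r) {μ : Measure S}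
    (hμ : MemMO C μ) : FiniteMeasure S :=
  ⟨cutoffMeasure C r μ, isFiniteMeasure_cutoffMeasure hC hr hμ⟩

/-- Convergence in `M_O` implies weak convergence of the cut off measures. -/
lemma MOTendsto.tendsto_cutoffMeasure [BorelSpace S] (hC : IsClosed C) (hr : 0 < r)
    {μn : ℕ → Measure S} {ν : Measure S} (hμ : ∀ n, MemMO C (μn n)) (hν : MemMO C ν)
    (h : MOTendsto C μn ν) :
    Tendsto (fun n => cutoffFiniteMeasure hC hr (hμ n)) atTop
      (𝓝 (cutoffFiniteMeasure hC hr hν)) := by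
  rw [FiniteMeasure.tendsto_iff_forall_lintegral_tendsto]
  intro f
  simp only [cutoffFiniteMeasure, FiniteMeasure.toMeasure_mk, lintegral_cutoffMeasure hC hr (hμ _),
    lintegral_cutoffMeasure hC hr hν]
  refine (ENNReal.continuous_ofReal.tendsto _).comp (h _ ?_)
  exact isCO_cutoff_mul hr (by fun_prop) (fun x => (f x).2)
      (fun x => NNReal.coe_le_coe.2 (f.apply_le_nndist_zero x))

/-- Every sequence in `M` has a subsequence that converges in `M_O`. -/
def MORelSeqCompact (C : Set S) (M : Set (Measure S)) : Prop :=
  ∀ μseq : ℕ → Measure S, (∀ n, μseq n ∈ M) →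
    ∃ φ : ℕ → ℕ, StrictMono φ ∧ ∃ ν : Measure S, MemMO C ν ∧
      MOTendsto C (fun n => μseq (φ n)) ν

variable {M : Set (Measure S)}

lemma MORelSeqCompact.iSup_lt_top [BorelSpace S] (hC : IsClosed C) (hM : ∀ μ ∈ M, MemMO C μ)
    (h : MORelSeqCompact C M) (hr : 0 < r) : (⨆ μ ∈ M, μ {x | r ≤ infDist x C}) < ⊤ := by
  suffices ∃ n : ℕ, ∀ μ ∈ M, μ {x | r ≤ infDist x C} ≤ n by
    obtain ⟨n, hn⟩ := this
    exact (iSup₂_le hn).trans_lt (ENNReal.natCast_lt_top n)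
  by_contra! hcon
  choose μ hμ hlt using hcon
  obtain ⟨φ, hφ, ν, hν, hlim⟩ := h μ hμ
  have hmass := (hlim.tendsto_cutoffMeasure hC hr (fun n => hM _ (hμ _)) hν).mass
  obtain ⟨b, hb⟩ := hmass.bddAbove_range
  obtain ⟨n, hn⟩ := exists_nat_gt b
  have h1 : cutoffMeasure C r (μ (φ n)) univ ≤ b := by
    have := hb ⟨n, rfl⟩
    rw [← ENNReal.coe_le_coe, FiniteMeasure.ennreal_mass] at this
    exact this
  have h2 : (φ n : ℝ≥0∞) < b := (hlt (φ n)).trans_le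
    (((measure_le_cutoffMeasure hr _ Subset.rfl measurableSet_le_infDist).trans
      (measure_mono (subset_univ _))).trans h1)
  have h3 : (n : ℝ≥0∞) ≤ φ n := by exact_mod_cast hφ.id_le n
  have h4 : (b : ℝ≥0∞) < n := by exact_mod_cast hn
  exact absurd (h2.trans h4) (not_lt.2 h3)

/-- Finitely many members of a countable open cover capture almost all the mass, uniformly. -/
lemma MORelSeqCompact.exists_cutoffMeasure_compl_le [BorelSpace S] (hC : IsClosed C)
    (hM : ∀ μ ∈ M, MemMO C μ) (h : MORelSeqCompact C M) (hr : 0 < r) {U : ℕ → Set S}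
    (hU : ∀ i, IsOpen (U i)) (hcov : ⋃ i, U i = univ) {ε : ℝ≥0∞} (hε : 0 < ε) :
    ∃ k, ∀ μ ∈ M, cutoffMeasure C r μ (⋃ i ≤ k, U i)ᶜ ≤ ε := by
  by_contra! hcon
  choose μ hμ hlt using hcon
  obtain ⟨φ, hφ, ν, hν, hlim⟩ := h μ hμ
  have hw := hlim.tendsto_cutoffMeasure hC hr (fun n => hM _ (hμ _)) hν
  have hanti : Antitone fun k => (⋃ i ≤ k, U i)ᶜ := fun a b hab =>
    compl_subset_compl.2 (biUnion_subset_biUnion_left fun i hi => le_trans hi hab)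
  have hclosed (k : ℕ) : IsClosed (⋃ i ≤ k, U i)ᶜ :=
    (isOpen_biUnion fun i _ => hU i).isClosed_compl
  have hge (k : ℕ) : ε ≤ cutoffMeasure C r ν (⋃ i ≤ k, U i)ᶜ := by
    refine le_trans ?_ (FiniteMeasure.limsup_measure_closed_le_of_tendsto hw (hclosed k))
    refine le_limsup_of_frequently_le' (Eventually.frequently ?_)
    filter_upwards [eventually_ge_atTop k] with n hn
    exact (hlt (φ n)).le.trans (measure_mono (hanti (hn.trans (hφ.id_le n))))
  have hfin := isFiniteMeasure_cutoffMeasure hC hr hν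
  have hlim0 := tendsto_measure_iInter_atTop (μ := cutoffMeasure C r ν)
    (fun k => (hclosed k).measurableSet.nullMeasurableSet) hanti ⟨0, measure_ne_top _ _⟩
  have hempty : ⋂ k, (⋃ i ≤ k, U i)ᶜ = ∅ := by
    rw [← compl_iUnion, compl_empty_iff, eq_univ_iff_forall]
    intro x
    obtain ⟨i, hi⟩ := mem_iUnion.1 (hcov.symm ▸ mem_univ x : x ∈ ⋃ i, U i)
    exact mem_iUnion.2 ⟨i, mem_biUnion (le_refl i) hi⟩
  rw [hempty, measure_empty] at hlim0
  exact absurd (ge_of_tendsto' hlim0 hge) (not_le.2 hε)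

lemma MORelSeqCompact.exists_isCompact [BorelSpace S] [CompleteSpace S]
    [TopologicalSpace.SeparableSpace S] (hC : IsClosed C)
    (hM : ∀ μ ∈ M, MemMO C μ) (h : MORelSeqCompact C M) (hr : 0 < r) {η : ℝ≥0∞} (hη : 0 < η) :
    ∃ K : Set S, IsCompact K ∧ K ⊆ {x | r ≤ infDist x C} ∧
      ∀ μ ∈ M, μ ({x | r ≤ infDist x C} \ K) ≤ η := by
  rcases isEmpty_or_nonempty S with hS | hS
  · exact ⟨∅, isCompact_empty, empty_subset _, fun μ _ => by simp [eq_empty_of_isEmpty]⟩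
  obtain ⟨D, hD⟩ := TopologicalSpace.exists_dense_seq S
  obtain ⟨u, -, hu0, hu⟩ := exists_seq_strictAnti_tendsto (0 : ℝ)
  obtain ⟨δ, hδ0, hδ⟩ := ENNReal.exists_pos_sum_of_countable' hη.ne' ℕ
  choose k hk using fun m =>
    h.exists_cutoffMeasure_compl_le hC hM hr (U := fun i => ball (D i) (u m))
    (fun i => isOpen_ball) (eq_univ_of_forall fun x => mem_iUnion.2 (hD.exists_dist_lt x (hu0 m)))
    (hδ0 m)
  set L := ⋂ m, ⋃ i ≤ k m, closedBall (D i) (u m) with hL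
  have hLc : IsClosed L := isClosed_iInter fun m =>
    (finite_Iic (k m)).isClosed_biUnion fun _ _ => isClosed_closedBall
  have hLk : IsCompact L := by
    refine TotallyBounded.isCompact_of_isClosed ?_ hLc
    refine Metric.totallyBounded_iff.2 fun ε hε => ?_
    obtain ⟨m, hm⟩ := (hu.eventually_lt_const hε).exists
    refine ⟨D '' Iic (k m), (finite_Iic _).image _, (iInter_subset _ m).trans ?_⟩
    rw [biUnion_image]
    exact iUnion₂_mono fun i _ => closedBall_subset_ball hm
  refine ⟨L ∩ {x | r ≤ infDist x C}, hLk.inter_right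
    (isClosed_le continuous_const (continuous_infDist_pt C)), inter_subset_right, fun μ hμ => ?_⟩
  calc μ ({x | r ≤ infDist x C} \ (L ∩ {x | r ≤ infDist x C}))
      ≤ cutoffMeasure C r μ ({x | r ≤ infDist x C} \ (L ∩ {x | r ≤ infDist x C})) :=
        measure_le_cutoffMeasure hr μ sdiff_subset (measurableSet_le_infDist.diff
          (hLc.measurableSet.inter measurableSet_le_infDist))
    _ ≤ cutoffMeasure C r μ (⋃ m, (⋃ i ≤ k m, ball (D i) (u m))ᶜ) := by
        refine measure_mono fun x hx => ?_
        have hxL : x ∉ L := fun hxL => hx.2 ⟨hxL, hx.1⟩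
        simp only [hL, mem_iInter, not_forall] at hxL
        obtain ⟨m, hm⟩ := hxL
        exact mem_iUnion.2 ⟨m, fun hb => hm (iUnion₂_mono (fun i _ => ball_subset_closedBall) hb)⟩
    _ ≤ ∑' m, cutoffMeasure C r μ (⋃ i ≤ k m, ball (D i) (u m))ᶜ := measure_iUnion_le _
    _ ≤ ∑' m, δ m := ENNReal.tsum_le_tsum fun m => hk m μ hμ
    _ ≤ η := hδ.le

end

section

variable {C : Set S} {M : Set (Measure S)}

lemma tsum_ofReal_half_div_two_pow : ∑' i : ℕ, ENNReal.ofReal (1 / 2 / 2 ^ i) = 1 := by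
  rw [← ENNReal.ofReal_tsum_of_nonneg (fun i => by positivity) (summable_geometric_two' 1),
    tsum_geometric_two', ENNReal.ofReal_one]

/-- A continuous weight, positive exactly off `C`, for which the weighted measures in `M` have
mass at most one and are uniformly tight. -/
lemma exists_weight [BorelSpace S] {r : ℕ → ℝ} (hr : Antitone r) (hr0 : ∀ i, 0 < r i)
    (hrlim : Tendsto r atTop (𝓝 0))
    (hbdd : ∀ i, (⨆ μ ∈ M, μ {x | r i ≤ infDist x C}) < ⊤)
    (htight : ∀ i, ∀ η : ℝ≥0∞, 0 < η → ∃ K : Set S, IsCompact K ∧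
      ∀ μ ∈ M, μ ({x | r i ≤ infDist x C} \ K) ≤ η) :
    ∃ w : S → ℝ, Continuous w ∧ (∀ x, 0 ≤ w x) ∧ (∀ x ∈ C, w x = 0) ∧
      (∀ ρ > 0, ∃ c > 0, ∀ x, ρ ≤ infDist x C → c ≤ w x) ∧
      (∀ μ ∈ M, ∫⁻ x, ENNReal.ofReal (w x) ∂μ ≤ 1) ∧
      ∀ ε : ℝ≥0∞, 0 < ε → ∃ K, IsCompact K ∧
        ∀ μ ∈ M, ∫⁻ x in Kᶜ, ENNReal.ofReal (w x) ∂μ ≤ ε := by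
  set b : ℕ → ℝ := fun i => (⨆ μ ∈ M, μ {x | r i ≤ infDist x C}).toReal with hb
  have hb0 (i : ℕ) : 0 ≤ b i := ENNReal.toReal_nonneg
  have hμb (i : ℕ) (μ) (hμ : μ ∈ M) : μ {x | r i ≤ infDist x C} ≤ ENNReal.ofReal (b i) := by
    rw [hb, ENNReal.ofReal_toReal (hbdd i).ne]
    exact le_iSup₂ (f := fun μ (_ : μ ∈ M) => μ {x | r i ≤ infDist x C}) μ hμ
  set a : ℕ → ℝ := fun i => 1 / 2 / 2 ^ i with ha
  have ha0 (i : ℕ) : 0 < a i := by positivity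
  set c : ℕ → ℝ := fun i => a i / (b i + 1) with hc
  have hc0 (i : ℕ) : 0 < c i := div_pos (ha0 i) (by linarith [hb0 i])
  have hca (i : ℕ) : c i ≤ a i := div_le_self (ha0 i).le (by linarith [hb0 i])
  have hcb (i : ℕ) : c i * b i ≤ a i := by
    rw [hc, div_mul_eq_mul_div, div_le_iff₀ (by linarith [hb0 i])]
    nlinarith [ha0 i, hb0 i]
  set g : ℕ → S → ℝ := fun i x => c i * max 0 (min 1 (infDist x C - r i)) with hg
  have hgc (i : ℕ) : Continuous (g i) := by
    have := continuous_infDist_pt C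
    fun_prop
  have hg0 (i : ℕ) (x : S) : 0 ≤ g i x := mul_nonneg (hc0 i).le (le_max_left _ _)
  have hgle (i : ℕ) (x : S) : g i x ≤ c i :=
    mul_le_of_le_one_right (hc0 i).le (max_le zero_le_one (min_le_left _ _))
  have hgz (i : ℕ) (x : S) (hx : infDist x C < r i) : g i x = 0 := by
    have : infDist x C - r i ≤ 0 := by linarith
    simp [hg, this]
  have hgs (x : S) : Summable fun i => g i x :=
    (summable_geometric_two' 1).of_nonneg_of_le (fun i => hg0 i x)
      fun i => (hgle i x).trans (hca i)
  have hint (μ : Measure S) (s : Set S) (hs : MeasurableSet s) :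
      ∫⁻ x in s, ENNReal.ofReal (∑' i, g i x) ∂μ ≤
        ∑' i, ENNReal.ofReal (c i) * μ ({x | r i ≤ infDist x C} ∩ s) := by
    simp_rw [ENNReal.ofReal_tsum_of_nonneg (hg0 · _) (hgs _)]
    rw [lintegral_tsum fun i => (hgc i).measurable.ennreal_ofReal.aemeasurable]
    refine ENNReal.tsum_le_tsum fun i => ?_
    rw [← Measure.restrict_apply measurableSet_le_infDist,
      ← lintegral_indicator_const measurableSet_le_infDist]
    refine lintegral_mono fun x => ?_
    by_cases hx : x ∈ {x | r i ≤ infDist x C}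
    · rw [indicator_of_mem hx]
      exact ENNReal.ofReal_le_ofReal (hgle i x)
    · simp [hgz i x (not_le.1 hx)]
  refine ⟨fun x => ∑' i, g i x, ?_, fun x => tsum_nonneg fun i => hg0 i x, ?_, ?_, ?_, ?_⟩
  · refine continuous_tsum hgc (summable_geometric_two' 1) fun i x => ?_
    rw [Real.norm_of_nonneg (hg0 i x)]
    exact (hgle i x).trans (hca i)
  · intro x hx
    have hz (i : ℕ) : g i x = 0 := hgz i x (by rw [infDist_zero_of_mem hx]; exact hr0 i)
    simp only [hz, tsum_zero]
  · intro ρ hρ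
    obtain ⟨i, hi⟩ := (hrlim.eventually_lt_const hρ).exists
    have hpos : 0 < min 1 (ρ - r i) := lt_min one_pos (sub_pos.2 hi)
    refine ⟨c i * min 1 (ρ - r i), mul_pos (hc0 i) hpos, fun x hx => ?_⟩
    refine le_trans ?_ ((hgs x).le_tsum i fun j _ => hg0 j x)
    refine mul_le_mul_of_nonneg_left (le_max_of_le_right ?_) (hc0 i).le
    exact min_le_min_left _ (by linarith)
  · intro μ hμ
    rw [← setLIntegral_univ]
    refine (hint μ univ MeasurableSet.univ).trans ?_
    rw [← tsum_ofReal_half_div_two_pow]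
    refine ENNReal.tsum_le_tsum fun i => ?_
    rw [inter_univ]
    refine (mul_le_mul_right (hμb i μ hμ) _).trans ?_
    rw [← ENNReal.ofReal_mul (hc0 i).le]
    exact ENNReal.ofReal_le_ofReal (hcb i)
  · intro ε hε
    have hε2 : 0 < ε / 2 := ENNReal.half_pos hε.ne'
    have htail := ENNReal.tendsto_sum_nat_add (fun i => ENNReal.ofReal (a i))
      (by rw [tsum_ofReal_half_div_two_pow]; exact ENNReal.one_ne_top)
    obtain ⟨N, hN⟩ := (htail.eventually_lt_const hε2).exists
    obtain ⟨K, hK, hKμ⟩ := htight N (ε / 2) hε2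
    refine ⟨K, hK, fun μ hμ => (hint μ Kᶜ hK.measurableSet.compl).trans ?_⟩
    rw [← Summable.sum_add_tsum_nat_add' (k := N) ENNReal.summable, ← ENNReal.add_halves ε]
    refine add_le_add ?_ (le_trans (ENNReal.tsum_le_tsum fun i => ?_) hN.le)
    · calc ∑ i ∈ Finset.range N, ENNReal.ofReal (c i) * μ ({x | r i ≤ infDist x C} ∩ Kᶜ)
          ≤ ∑ i ∈ Finset.range N, ENNReal.ofReal (a i) * (ε / 2) := by
            refine Finset.sum_le_sum fun i hi => mul_le_mul' (ENNReal.ofReal_le_ofReal (hca i)) ?_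
            refine le_trans (measure_mono ?_) (hKμ μ hμ)
            exact fun x hx => ⟨(hr (Finset.mem_range.1 hi).le).trans hx.1, hx.2⟩
        _ = (∑ i ∈ Finset.range N, ENNReal.ofReal (a i)) * (ε / 2) := by rw [Finset.sum_mul]
        _ ≤ 1 * (ε / 2) := by
            gcongr
            exact (ENNReal.sum_le_tsum _).trans tsum_ofReal_half_div_two_pow.le
        _ = ε / 2 := one_mul _
    · refine (mul_le_mul_right ((measure_mono inter_subset_left).trans (hμb _ μ hμ)) _).trans ?_
      rw [← ENNReal.ofReal_mul (hc0 _).le]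
      exact ENNReal.ofReal_le_ofReal (hcb _)

/-- The measure `w • μ`, completed to total mass one by an atom at `x₀`. -/
def weightedProba (w : S → ℝ) (x₀ : S) (μ : Measure S) : Measure S :=
  μ.withDensity (fun x => ENNReal.ofReal (w x)) +
    (1 - ∫⁻ x, ENNReal.ofReal (w x) ∂μ) • Measure.dirac x₀

omit [MetricSpace S] in
lemma isProbabilityMeasure_weightedProba {w : S → ℝ} (x₀ : S) {μ : Measure S}
    (h : ∫⁻ x, ENNReal.ofReal (w x) ∂μ ≤ 1) : IsProbabilityMeasure (weightedProba w x₀ μ) := by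
  refine ⟨?_⟩
  simp [weightedProba, withDensity_apply, add_tsub_cancel_of_le h]

lemma weightedProba_compl_le [BorelSpace S] {w : S → ℝ} (x₀ : S) {μ : Measure S}
    {K : Set S} (hK : IsCompact K) {ε : ℝ≥0∞}
    (h : ∫⁻ x in Kᶜ, ENNReal.ofReal (w x) ∂μ ≤ ε) :
    weightedProba w x₀ μ (insert x₀ K)ᶜ ≤ ε := by
  have hm : MeasurableSet (insert x₀ K)ᶜ := (hK.insert x₀).measurableSet.compl
  simp only [weightedProba, Measure.add_apply, Measure.smul_apply, withDensity_apply _ hm,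
    Measure.dirac_apply' _ hm]
  simp only [mem_compl_iff, mem_insert_iff, true_or, not_true_eq_false, not_false_eq_true,
    indicator_of_notMem, smul_zero, add_zero]
  exact (lintegral_mono_set (compl_subset_compl.2 (subset_insert _ _))).trans h

lemma integral_weightedProba [BorelSpace S] {w : S → ℝ} (hw : Continuous w) (hw0 : ∀ x, 0 ≤ w x)
    {x₀ : S} {μ : Measure S} (h1 : ∫⁻ x, ENNReal.ofReal (w x) ∂μ ≤ 1)
    (f : BoundedContinuousFunction S ℝ) (hf : f x₀ = 0) :
    ∫ x, f x ∂weightedProba w x₀ μ = ∫ x, w x * f x ∂μ := by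
  have : IsFiniteMeasure (μ.withDensity fun x => ENNReal.ofReal (w x)) :=
    isFiniteMeasure_withDensity (h1.trans_lt ENNReal.one_lt_top).ne
  have hd : Integrable f ((1 - ∫⁻ x, ENNReal.ofReal (w x) ∂μ) • Measure.dirac x₀) :=
    (f.integrable _).smul_measure (tsub_le_self.trans_lt ENNReal.one_lt_top).ne
  rw [weightedProba, integral_add_measure (f.integrable _) hd, integral_smul_measure,
    integral_dirac, hf, smul_zero, add_zero,
    integral_withDensity_eq_integral_toReal_smul hw.measurable.ennreal_ofReal
      (Eventually.of_forall fun _ => ENNReal.ofReal_lt_top)]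
  simp [ENNReal.toReal_ofReal (hw0 _)]

omit [MeasurableSpace S] in
/-- The quotient of a test function in `C_O` by a weight bounded below away from `C`. -/
lemma IsCO.exists_eq_div (hC : IsClosed C) {w : S → ℝ} (hw : Continuous w)
    (hwlow : ∀ ρ > 0, ∃ c > 0, ∀ x, ρ ≤ infDist x C → c ≤ w x) {f : S → ℝ} (hf : IsCO C f) :
    ∃ q : BoundedContinuousFunction S ℝ, ∀ x, q x = (w x)⁻¹ * f x ∧ w x * q x = f x := by
  have hfc := hf.continuous hC
  obtain ⟨-, h0, ⟨B, hB⟩, ρ, hρ, hz⟩ := hf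
  obtain ⟨c, hc, hcw⟩ := hwlow (ρ / 2) (half_pos hρ)
  have heq (x : S) : (w x)⁻¹ * f x = (max c (w x))⁻¹ * f x := by
    rcases lt_or_ge (infDist x C) ρ with hx | hx
    · simp [hz x hx]
    · rw [max_eq_right (hcw x (by linarith))]
  have hpos (x : S) : 0 < max c (w x) := lt_max_of_lt_left hc
  have hcont : Continuous fun x => (max c (w x))⁻¹ * f x :=
    ((continuous_const.max hw).inv₀ fun x => (hpos x).ne').mul hfc
  refine ⟨BoundedContinuousFunction.ofNormedAddCommGroup _ hcont (c⁻¹ * B) fun x => ?_,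
    fun x => ⟨(heq x).symm, ?_⟩⟩
  · rw [Real.norm_of_nonneg (mul_nonneg (inv_nonneg.2 (hpos x).le) (h0 x))]
    exact mul_le_mul (inv_anti₀ hc (le_max_left _ _)) (hB x) (h0 x) (inv_nonneg.2 hc.le)
  · rw [BoundedContinuousFunction.coe_ofNormedAddCommGroup]
    rcases lt_or_ge (infDist x C) ρ with hx | hx
    · simp [hz x hx]
    · have hcx := hcw x (by linarith)
      rw [max_eq_right hcx, mul_inv_cancel_left₀ (hc.trans_le hcx).ne']

lemma memMO_withDensity_inv [BorelSpace S] (hC : IsClosed C) {w : S → ℝ}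
    (hwC : ∀ x ∈ C, w x = 0) (hwlow : ∀ ρ > 0, ∃ c > 0, ∀ x, ρ ≤ infDist x C → c ≤ w x)
    (P : Measure S) [IsFiniteMeasure P] :
    MemMO C (P.withDensity fun x => ENNReal.ofReal (w x)⁻¹) := by
  refine ⟨?_, fun ρ hρ => ?_⟩
  · rw [withDensity_apply _ hC.measurableSet,
      setLIntegral_congr_fun (g := fun _ => 0) hC.measurableSet fun x hx => by simp [hwC x hx]]
    simp
  · obtain ⟨c, hc, hcw⟩ := hwlow ρ hρ
    rw [withDensity_apply _ measurableSet_le_infDist]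
    refine (setLIntegral_mono' (g := fun _ => ENNReal.ofReal c⁻¹) measurableSet_le_infDist
      fun x hx => ENNReal.ofReal_le_ofReal (inv_anti₀ hc (hcw x hx))).trans_lt ?_
    rw [setLIntegral_const]
    exact ENNReal.mul_lt_top ENNReal.ofReal_lt_top (measure_lt_top _ _)

lemma moRelSeqCompact_of_tight [BorelSpace S] [TopologicalSpace.SeparableSpace S]
    (hC : IsClosed C) {r : ℕ → ℝ} (hr : Antitone r) (hr0 : ∀ i, 0 < r i)
    (hrlim : Tendsto r atTop (𝓝 0))
    (hbdd : ∀ i, (⨆ μ ∈ M, μ {x | r i ≤ infDist x C}) < ⊤)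
    (htight : ∀ i, ∀ η : ℝ≥0∞, 0 < η → ∃ K : Set S, IsCompact K ∧
      ∀ μ ∈ M, μ ({x | r i ≤ infDist x C} \ K) ≤ η) :
    MORelSeqCompact C M := by
  intro μ hμ
  rcases C.eq_empty_or_nonempty with rfl | ⟨x₀, hx₀⟩
  · refine ⟨id, strictMono_id, 0, ⟨by simp, by simp⟩, fun f hf => ?_⟩
    obtain ⟨-, -, -, ρ, hρ, hz⟩ := hf
    have : f = 0 := funext fun x => hz x (by simpa using hρ)
    simp [this]
  obtain ⟨w, hw, hw0, hwC, hwlow, hw1, hwK⟩ := exists_weight hr hr0 hrlim hbdd htight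
  let P : ℕ → ProbabilityMeasure S := fun n =>
    ⟨weightedProba w x₀ (μ n), isProbabilityMeasure_weightedProba x₀ (hw1 _ (hμ n))⟩
  have hPt : IsTightMeasureSet {(ν : Measure S) | ν ∈ range P} := by
    rw [isTightMeasureSet_iff_exists_isCompact_measure_compl_le]
    intro ε hε
    obtain ⟨K, hK, hKε⟩ := hwK ε hε
    refine ⟨insert x₀ K, hK.insert x₀, ?_⟩
    rintro _ ⟨_, ⟨n, rfl⟩, rfl⟩
    exact weightedProba_compl_le x₀ hK (hKε _ (hμ n))
  obtain ⟨Q, -, φ, hφ, hlim⟩ := (isCompact_closure_of_isTightMeasureSet hPt).isSeqCompact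
    fun n => subset_closure (mem_range_self n)
  refine ⟨φ, hφ, (Q : Measure S).withDensity fun x => ENNReal.ofReal (w x)⁻¹,
    memMO_withDensity_inv hC hwC hwlow _, fun f hf => ?_⟩
  obtain ⟨q, hq⟩ := hf.exists_eq_div hC hw hwlow
  have hq0 : q x₀ = 0 := by simp [(hq x₀).1, hwC x₀ hx₀]
  have hconv := ProbabilityMeasure.tendsto_iff_forall_integral_tendsto.1 hlim q
  have hQ : ∫ x, f x ∂(Q : Measure S).withDensity (fun x => ENNReal.ofReal (w x)⁻¹) =
      ∫ x, q x ∂(Q : Measure S) := by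
    have hm : Measurable fun x => ENNReal.ofReal (w x)⁻¹ := hw.measurable.inv.ennreal_ofReal
    rw [integral_withDensity_eq_integral_toReal_smul hm
      (Eventually.of_forall fun _ => ENNReal.ofReal_lt_top)]
    refine integral_congr_ae (Eventually.of_forall fun x => ?_)
    simp [ENNReal.toReal_ofReal (inv_nonneg.2 (hw0 x)), (hq x).1]
  have hP (n : ℕ) : ∫ x, q x ∂(P (φ n) : Measure S) = ∫ x, f x ∂μ (φ n) := by
    refine (integral_weightedProba hw hw0 (hw1 _ (hμ _)) q hq0).trans ?_
    simp only [(hq _).2]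
  rw [hQ]
  exact hconv.congr hP

end

/-- Prohorov-type characterization of relative compactness in `M_O`: every sequence in
`M ⊆ M_O` has a subsequence converging in `M_O` iff there is a sequence `r_i ↓ 0` such
that for each `i` the masses of `S \ C^{r_i}` are uniformly bounded over `M` and a
uniform tightness condition holds on `S \ C^{r_i}`. -/
theorem stmt8 [BorelSpace S] [CompleteSpace S] [TopologicalSpace.SeparableSpace S]
    (C : Set S) (hC : IsClosed C)
    (M : Set (Measure S)) (hM : ∀ μ ∈ M, MemMO C μ) :
    (∀ μseq : ℕ → Measure S, (∀ n, μseq n ∈ M) →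
        ∃ φ : ℕ → ℕ, StrictMono φ ∧ ∃ ν : Measure S, MemMO C ν ∧
          MOTendsto C (fun n => μseq (φ n)) ν)
    ↔
    (∃ r : ℕ → ℝ, StrictAnti r ∧ (∀ i, 0 < r i) ∧ Tendsto r atTop (𝓝 0) ∧
      ∀ i, (⨆ μ ∈ M, μ {x | r i ≤ infDist x C}) < ⊤ ∧
        ∀ η : ℝ≥0∞, 0 < η → ∃ K : Set S, IsCompact K ∧ K ⊆ {x | r i ≤ infDist x C} ∧
          ∀ μ ∈ M, μ ({x | r i ≤ infDist x C} \ K) ≤ η) := by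
  constructor
  · intro h
    obtain ⟨r, hr, hr0, hrlim⟩ := exists_seq_strictAnti_tendsto (0 : ℝ)
    exact ⟨r, hr, hr0, hrlim, fun i => ⟨MORelSeqCompact.iSup_lt_top hC hM h (hr0 i),
      fun η hη => MORelSeqCompact.exists_isCompact hC hM h (hr0 i) hη⟩⟩
  · rintro ⟨r, hr, hr0, hrlim, h⟩
    refine moRelSeqCompact_of_tight hC hr.antitone hr0 hrlim (fun i => (h i).1) fun i η hη => ?_
    obtain ⟨K, hK, -, hKμ⟩ := (h i).2 η hη
    exact ⟨K, hK, hKμ⟩
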